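/- The functions \{\sqrt{\epsilon_m(n+1)/\pi}\, R_n^m(r)\cos m\phi\} \cup \{\sqrt{2(n+1)/\pi}\, R_n^m(r)\sin m\phi : m \ge 1\} (over admissible pairs (n,m)) form an orthonormal family in L^2 of the unit disk with measure r\,dr\,d\phi; that is, any two distinct such functions have inner product \int_0^1\int_0^{2\pi} f g\, r\, d\phi\, dr = 0 and each has norm 1. -/

import Mathlib

open scoped Real BigOperators

/-- Radial part of the Zernike polynomial. -/
noncomputable def Rz (n m : ℕ) (r : ℝ) : ℝ :=
  ∑ ℓ ∈ Finset.range ((n - m) / 2 + 1),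
    (-1 : ℝ) ^ ℓ * (Nat.factorial (n - ℓ) : ℝ) /
      ((Nat.factorial ℓ : ℝ) * (Nat.factorial ((n - m) / 2 - ℓ) : ℝ) *
        (Nat.factorial ((n + m) / 2 - ℓ) : ℝ)) *
      r ^ (n - 2 * ℓ)

/-- Normalized Zernike disk function: `b = true` gives the cosine type,
`b = false` the sine type. -/
noncomputable def zern (n m : ℕ) (b : Bool) (r φ : ℝ) : ℝ :=
  Real.sqrt ((if m = 0 then (1:ℝ) else 2) * ((n : ℝ) + 1) / π) * Rz n m r *
    (if b then Real.cos ((m : ℝ) * φ) else Real.sin ((m : ℝ) * φ))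

open Polynomial

theorem integral_cos_int_mul (k : ℤ) :
    ∫ φ in (0:ℝ)..(2 * π), Real.cos (k * φ) = if k = 0 then 2 * π else 0 := by
  split_ifs with h
  · simp [h]
  · have hk : (k : ℝ) ≠ 0 := by exact_mod_cast h
    have hs : Real.sin (k * (2 * π)) = 0 := by
      have := Real.sin_int_mul_pi (2 * k)
      rw [← this]
      push_cast
      ring_nf
    rw [intervalIntegral.integral_comp_mul_left (fun x => Real.cos x) hk, integral_cos, hs]
    simp

theorem integral_sin_int_mul (k : ℤ) :
    ∫ φ in (0:ℝ)..(2 * π), Real.sin (k * φ) = 0 := by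
  by_cases h : k = 0
  · simp [h]
  · have hk : (k : ℝ) ≠ 0 := by exact_mod_cast h
    rw [intervalIntegral.integral_comp_mul_left (fun x => Real.sin x) hk, integral_sin,
      Real.cos_int_mul_two_pi]
    simp

theorem integral_cos_mul_cos_nat (m n : ℕ) :
    ∫ φ in (0:ℝ)..(2 * π), Real.cos (m * φ) * Real.cos (n * φ) =
      if m = n then (if m = 0 then 2 * π else π) else 0 := by
  have h : ∀ φ : ℝ, Real.cos (m * φ) * Real.cos (n * φ) =
      (1 / 2) * (Real.cos (((m - n : ℤ) : ℝ) * φ) + Real.cos (((m + n : ℤ) : ℝ) * φ)) := by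
    intro φ
    have := Real.two_mul_cos_mul_cos (m * φ) (n * φ)
    push_cast
    rw [sub_mul, add_mul]
    linarith
  simp_rw [h]
  rw [intervalIntegral.integral_const_mul, intervalIntegral.integral_add
    (Continuous.intervalIntegrable (by fun_prop) _ _)
    (Continuous.intervalIntegrable (by fun_prop) _ _), integral_cos_int_mul, integral_cos_int_mul]
  split_ifs <;> first | omega | ring

theorem integral_sin_mul_sin_nat {m : ℕ} (hm : 1 ≤ m) (n : ℕ) :
    ∫ φ in (0:ℝ)..(2 * π), Real.sin (m * φ) * Real.sin (n * φ) = if m = n then π else 0 := by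
  have h : ∀ φ : ℝ, Real.sin (m * φ) * Real.sin (n * φ) =
      (1 / 2) * (Real.cos (((m - n : ℤ) : ℝ) * φ) - Real.cos (((m + n : ℤ) : ℝ) * φ)) := by
    intro φ
    have := Real.two_mul_sin_mul_sin (m * φ) (n * φ)
    push_cast
    rw [sub_mul, add_mul]
    linarith
  simp_rw [h]
  rw [intervalIntegral.integral_const_mul, intervalIntegral.integral_sub
    (Continuous.intervalIntegrable (by fun_prop) _ _)
    (Continuous.intervalIntegrable (by fun_prop) _ _), integral_cos_int_mul, integral_cos_int_mul]
  split_ifs <;> first | omega | ring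

theorem integral_sin_mul_cos_nat (m n : ℕ) :
    ∫ φ in (0:ℝ)..(2 * π), Real.sin (m * φ) * Real.cos (n * φ) = 0 := by
  have h : ∀ φ : ℝ, Real.sin (m * φ) * Real.cos (n * φ) =
      (1 / 2) * (Real.sin (((m - n : ℤ) : ℝ) * φ) + Real.sin (((m + n : ℤ) : ℝ) * φ)) := by
    intro φ
    have := Real.two_mul_sin_mul_cos (m * φ) (n * φ)
    push_cast
    rw [sub_mul, add_mul]
    linarith
  simp_rw [h]
  rw [intervalIntegral.integral_const_mul, intervalIntegral.integral_add
    (Continuous.intervalIntegrable (by fun_prop) _ _)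
    (Continuous.intervalIntegrable (by fun_prop) _ _), integral_sin_int_mul, integral_sin_int_mul]
  ring

theorem integral_angular_mul (m m' : ℕ) (b b' : Bool) (hb : b = false → 1 ≤ m) :
    (∫ φ in (0:ℝ)..(2 * π),
      (if b then Real.cos ((m : ℝ) * φ) else Real.sin ((m : ℝ) * φ)) *
        (if b' then Real.cos ((m' : ℝ) * φ) else Real.sin ((m' : ℝ) * φ))) =
      if m = m' ∧ b = b' then (if m = 0 then 2 * π else π) else 0 := by
  cases b <;> cases b'
  · have hm := hb rfl
    have : m ≠ 0 := by omega
    simpa [this] using integral_sin_mul_sin_nat hm m'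
  · simpa using integral_sin_mul_cos_nat m m'
  · simpa [mul_comm] using integral_sin_mul_cos_nat m' m
  · simpa using integral_cos_mul_cos_nat m m'

theorem fwdDiff_iter_inv (k : ℕ) {x : ℝ} (hx : 0 < x) :
    (fwdDiff (1 : ℝ))^[k] (fun y : ℝ => y⁻¹) x =
      (-1) ^ k * k.factorial / (ascPochhammer ℝ (k + 1)).eval x := by
  induction k generalizing x with
  | zero => simp
  | succ k ih =>
    rw [Function.iterate_succ_apply', fwdDiff, ih hx, ih (by linarith)]
    have h1 := ascPochhammer_pos k (x + 1) (by linarith)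
    have e1 : (ascPochhammer ℝ (k + 1)).eval x = x * (ascPochhammer ℝ k).eval (x + 1) := by
      simp [ascPochhammer_succ_left]
    have e2 : (ascPochhammer ℝ (k + 1)).eval (x + 1) =
        (ascPochhammer ℝ k).eval (x + 1) * (x + 1 + k) := ascPochhammer_succ_eval k (x + 1)
    have e3 : (ascPochhammer ℝ (k + 1 + 1)).eval x =
        x * ((ascPochhammer ℝ k).eval (x + 1) * (x + 1 + k)) := by
      rw [← e2]
      rw [ascPochhammer_succ_left]
      simp
    rw [e1, e2, e3, Nat.factorial_succ]
    have h2 : x + 1 + k ≠ 0 := by positivity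
    have h3 := h1.ne'
    push_cast
    field_simp
    ring

theorem fwdDiff_iter_eval_div {k : ℕ} {Q : ℝ[X]} (hQ : Q.natDegree ≤ k) {a : ℝ} (ha : 0 < a) :
    (fwdDiff (1 : ℝ))^[k] (fun x => Q.eval x / (x + a)) 0 =
      Q.eval (-a) * ((-1) ^ k * k.factorial / (ascPochhammer ℝ (k + 1)).eval a) := by
  have hinv := fwdDiff_iter_inv k ha
  obtain rfl | hk := Nat.eq_zero_or_pos k
  · rw [Polynomial.eq_C_of_natDegree_le_zero hQ]
    simp [div_eq_mul_inv]
  set q := Q /ₘ (X - C (-a)) with hq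
  have hdeg : q.natDegree < k := by
    rw [hq, natDegree_divByMonic _ (monic_X_sub_C _), natDegree_X_sub_C]
    omega
  have hzero := congrFun (Polynomial.fwdDiff_iter_eq_zero_of_degree_lt hdeg) 0
  have hdiv : ∀ x, Q.eval x = Q.eval (-a) + (x + a) * q.eval x := by
    intro x
    have := congrArg (Polynomial.eval x) (modByMonic_add_div Q (X - C (-a)))
    rw [modByMonic_X_sub_C_eq_C_eval] at this
    simpa [hq] using this.symm
  rw [Pi.zero_apply] at hzero
  rw [← hinv]
  refine Eq.trans ?_ (congrArg (· + _) hzero |>.trans (zero_add _))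
  simp only [fwdDiff_iter_eq_sum_shift, Finset.mul_sum, ← Finset.sum_add_distrib]
  refine Finset.sum_congr rfl fun i _ => ?_
  have hne : (i : ℝ) + a ≠ 0 := by positivity
  simp only [zero_add, nsmul_eq_mul, mul_one, zsmul_eq_mul]
  rw [hdiv i, add_comm a]
  field_simp
  ring

theorem Rz_eq_sum (m k : ℕ) (r : ℝ) :
    Rz (m + 2 * k) m r = ∑ i ∈ Finset.range (k + 1),
      ((-1) ^ (k - i) * (k.choose i : ℝ)) *
        ((ascPochhammer ℝ k).eval ((m : ℝ) + i + 1) / k.factorial) * r ^ (m + 2 * i) := by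
  have h1 : (m + 2 * k - m) / 2 = k := by omega
  have h2 : (m + 2 * k + m) / 2 = m + k := by omega
  rw [Rz, h1, h2, ← Finset.sum_range_reflect]
  refine Finset.sum_congr rfl fun i hi => ?_
  have hi : i ≤ k := Nat.lt_succ_iff.mp (Finset.mem_range.mp hi)
  obtain ⟨l, rfl⟩ := Nat.exists_eq_add_of_le hi
  have e1 : i + l + 1 - 1 - i = l := by omega
  have e2 : m + 2 * (i + l) - l = m + i + (i + l) := by omega
  have e3 : i + l - l = i := by omega
  have e4 : m + (i + l) - l = m + i := by omega
  have e5 : m + 2 * (i + l) - 2 * l = m + 2 * i := by omega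
  have e6 : i + l - i = l := by omega
  rw [e1, e2, e3, e4, e5, e6]
  have hP : (ascPochhammer ℝ (i + l)).eval ((m : ℝ) + i + 1) =
      ((m + i + 1).ascFactorial (i + l) : ℝ) := by
    rw [← ascPochhammer_nat_eq_ascFactorial, ascPochhammer_eval_cast]
    push_cast
    rfl
  have hf : ((m + i).factorial : ℝ) * ((m + i + 1).ascFactorial (i + l) : ℝ) =
      (m + i + (i + l)).factorial := by
    exact_mod_cast Nat.factorial_mul_ascFactorial (m + i) (i + l)
  have hc : ((i + l).choose i : ℝ) * i.factorial * l.factorial = (i + l).factorial := by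
    rw [Nat.choose_symm_add]
    exact_mod_cast Nat.add_choose_mul_factorial_mul_factorial i l
  rw [hP, ← hf, ← hc]
  have := Nat.choose_pos (Nat.le_add_right i l)
  have g1 : ((i + l).choose i : ℝ) ≠ 0 := by positivity
  field_simp

theorem continuous_Rz (n m : ℕ) : Continuous (Rz n m) := by
  unfold Rz
  fun_prop

theorem integral_Rz_mul_pow (m k j : ℕ) (hj : j ≤ k) :
    ∫ r in (0:ℝ)..1, Rz (m + 2 * k) m r * r ^ (m + 2 * j) * r =
      if j = k then (k.factorial * (m + k).factorial : ℝ) / (2 * (m + 2 * k + 1).factorial)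
      else 0 := by
  set a : ℝ := m + j + 1 with ha
  have hapos : 0 < a := by positivity
  set Q : ℝ[X] := (ascPochhammer ℝ k).comp (X + C ((m : ℝ) + 1)) with hQ
  have hdeg : Q.natDegree ≤ k := by
    rw [hQ, natDegree_comp, natDegree_X_add_C, ascPochhammer_natDegree, mul_one]
  have hsum : ∫ r in (0:ℝ)..1, Rz (m + 2 * k) m r * r ^ (m + 2 * j) * r =
      1 / (2 * k.factorial) * (fwdDiff (1 : ℝ))^[k] (fun x => Q.eval x / (x + a)) 0 := by
    simp_rw [Rz_eq_sum, Finset.sum_mul]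
    rw [intervalIntegral.integral_finsetSum
      fun i _ => Continuous.intervalIntegrable (by fun_prop) _ _, fwdDiff_iter_eq_sum_shift,
      Finset.mul_sum]
    refine Finset.sum_congr rfl fun i _ => ?_
    have hpow : ∀ c r : ℝ, c * r ^ (m + 2 * i) * r ^ (m + 2 * j) * r =
        c * r ^ (2 * (m + i + j) + 1) := fun c r => by ring
    simp_rw [hpow]
    rw [intervalIntegral.integral_const_mul, integral_pow]
    have hev : Q.eval (i : ℝ) = (ascPochhammer ℝ k).eval ((m : ℝ) + i + 1) := by
      simp only [hQ, eval_comp, eval_add, eval_X, eval_C]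
      congr 1
      ring
    simp only [zero_add, nsmul_eq_mul, mul_one, zsmul_eq_mul, hev, ha]
    push_cast
    have h1 : (i : ℝ) + (m + j + 1) ≠ 0 := by positivity
    have h2 : (2 * ((m : ℝ) + i + j) + 1 + 1) ≠ 0 := by positivity
    rw [one_pow, zero_pow (by omega)]
    field_simp
    ring
  have hneg : Q.eval (-a) = (-1) ^ k * (j.descFactorial k : ℝ) := by
    have : -a + ((m : ℝ) + 1) = -(j : ℝ) := by rw [ha]; ring
    simp only [hQ, eval_comp, eval_add, eval_X, eval_C]
    rw [this, ascPochhammer_eval_neg_eq_descPochhammer, descPochhammer_eval_eq_descFactorial]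
  rw [hsum, fwdDiff_iter_eval_div hdeg hapos, hneg]
  split_ifs with hjk
  · subst hjk
    have hP : (ascPochhammer ℝ (j + 1)).eval a = ((m + j + 1).ascFactorial (j + 1) : ℝ) := by
      rw [← ascPochhammer_nat_eq_ascFactorial, ascPochhammer_eval_cast, ha]
      push_cast
      rfl
    have hf : ((m + j).factorial : ℝ) * ((m + j + 1).ascFactorial (j + 1) : ℝ) =
        (m + 2 * j + 1).factorial := by
      have := Nat.factorial_mul_ascFactorial (m + j) (j + 1)
      rw [show m + j + (j + 1) = m + 2 * j + 1 by ring] at this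
      exact_mod_cast this
    have hA : ((m + j + 1).ascFactorial (j + 1) : ℝ) ≠ 0 := by
      have := Nat.ascFactorial_pos (m + j) (j + 1)
      positivity
    have hs : ((-1 : ℝ) ^ j) * (-1) ^ j = 1 := by rw [← mul_pow]; simp
    rw [hP, ← hf, Nat.descFactorial_self]
    field_simp
    rw [pow_two, hs]
  · rw [Nat.descFactorial_eq_zero_iff_lt.mpr (lt_of_le_of_ne hj hjk)]
    simp

theorem integral_Rz_mul_Rz_of_le (m k l : ℕ) (hl : l ≤ k) :
    ∫ r in (0:ℝ)..1, Rz (m + 2 * k) m r * Rz (m + 2 * l) m r * r =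
      if l = k then 1 / (2 * ((m : ℝ) + 2 * k + 1)) else 0 := by
  have hexp : ∀ r : ℝ, Rz (m + 2 * k) m r * Rz (m + 2 * l) m r * r =
      ∑ i ∈ Finset.range (l + 1),
        ((-1) ^ (l - i) * (l.choose i : ℝ)) *
          ((ascPochhammer ℝ l).eval ((m : ℝ) + i + 1) / l.factorial) *
            (Rz (m + 2 * k) m r * r ^ (m + 2 * i) * r) := by
    intro r
    rw [Rz_eq_sum m l, Finset.mul_sum, Finset.sum_mul]
    exact Finset.sum_congr rfl fun i _ => by ring
  have hcont := continuous_Rz (m + 2 * k) m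
  simp_rw [hexp]
  rw [intervalIntegral.integral_finsetSum
    fun i _ => Continuous.intervalIntegrable (by fun_prop) _ _]
  simp_rw [intervalIntegral.integral_const_mul]
  rw [Finset.sum_range_succ, Finset.sum_eq_zero, zero_add, integral_Rz_mul_pow m k l hl]
  · split_ifs with h
    · subst h
      have hP : (ascPochhammer ℝ l).eval ((m : ℝ) + l + 1) =
          ((m + l + 1).ascFactorial l : ℝ) := by
        rw [← ascPochhammer_nat_eq_ascFactorial, ascPochhammer_eval_cast]
        push_cast
        rfl
      have hf : ((m + l).factorial : ℝ) * ((m + l + 1).ascFactorial l : ℝ) =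
          (m + 2 * l).factorial := by
        have := Nat.factorial_mul_ascFactorial (m + l) l
        rw [show m + l + l = m + 2 * l by ring] at this
        exact_mod_cast this
      have hA : ((m + l + 1).ascFactorial l : ℝ) ≠ 0 := by
        have := Nat.ascFactorial_pos (m + l) l
        positivity
      rw [hP, Nat.factorial_succ, Nat.cast_mul, ← hf, Nat.sub_self, Nat.choose_self]
      push_cast
      field_simp
    · simp
  · intro i hi
    have hi := Finset.mem_range.mp hi
    rw [integral_Rz_mul_pow m k i (by omega), if_neg (by omega), mul_zero]

theorem integral_Rz_mul_Rz (m k l : ℕ) :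
    ∫ r in (0:ℝ)..1, Rz (m + 2 * k) m r * Rz (m + 2 * l) m r * r =
      if k = l then 1 / (2 * ((m : ℝ) + 2 * k + 1)) else 0 := by
  rcases le_total l k with h | h
  · simp_rw [integral_Rz_mul_Rz_of_le m k l h, eq_comm]
  · simp_rw [mul_comm (Rz (m + 2 * k) m _), integral_Rz_mul_Rz_of_le m l k h]
    split_ifs with e
    · rw [e]
    · rfl

theorem zernike_orthonormal (n m n' m' : ℕ) (b b' : Bool)
    (hmn : m ≤ n) (heven : Even (n - m)) (hmn' : m' ≤ n') (heven' : Even (n' - m'))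
    (hb : b = false → 1 ≤ m) (hb' : b' = false → 1 ≤ m') :
    (∫ r in (0:ℝ)..1, (∫ φ in (0:ℝ)..(2 * π), zern n m b r φ * zern n' m' b' r φ) * r) =
      if (n, m, b) = (n', m', b') then 1 else 0 := by
  set N := Real.sqrt ((if m = 0 then (1:ℝ) else 2) * ((n : ℝ) + 1) / π) with hN
  set N' := Real.sqrt ((if m' = 0 then (1:ℝ) else 2) * ((n' : ℝ) + 1) / π) with hN'
  have hinner : ∀ r : ℝ, (∫ φ in (0:ℝ)..(2 * π), zern n m b r φ * zern n' m' b' r φ) * r =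
      (N * N' * if m = m' ∧ b = b' then (if m = 0 then 2 * π else π) else 0) *
        (Rz n m r * Rz n' m' r * r) := by
    intro r
    rw [← integral_angular_mul m m' b b' hb]
    have : ∀ φ : ℝ, zern n m b r φ * zern n' m' b' r φ = (N * N' * (Rz n m r * Rz n' m' r)) *
        ((if b then Real.cos ((m : ℝ) * φ) else Real.sin ((m : ℝ) * φ)) *
          (if b' then Real.cos ((m' : ℝ) * φ) else Real.sin ((m' : ℝ) * φ))) := by
      intro φ
      simp only [zern, ← hN, ← hN']
      ring
    simp_rw [this]
    rw [intervalIntegral.integral_const_mul]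
    ring
  simp_rw [hinner]
  rw [intervalIntegral.integral_const_mul]
  by_cases hm : m = m' ∧ b = b'
  swap
  · rw [if_neg hm, if_neg]
    · simp
    · simpa using fun _ => not_and.mp hm
  obtain ⟨rfl, rfl⟩ := hm
  obtain ⟨k, hk⟩ := heven
  obtain ⟨l, hl⟩ := heven'
  obtain rfl : n = m + 2 * k := by omega
  obtain rfl : n' = m + 2 * l := by omega
  rw [integral_Rz_mul_Rz]
  by_cases hkl : k = l
  · subst hkl
    rw [hN, hN', Real.mul_self_sqrt (by positivity)]
    have := Real.pi_pos.ne'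
    have : (m : ℝ) + 2 * k + 1 ≠ 0 := by positivity
    push_cast
    simp only [and_self, if_true]
    split_ifs <;> field_simp
  · rw [if_neg hkl, mul_zero, if_neg]
    simpa using hkl
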